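/- arXiv:2304.14527 — 3 statements merged into one kernel-verified Lean document; each statement's English description precedes it below -/
import Mathlib

section
/- Let K ≥ 2 be an even integer, let G be a finite simple bipartite graph in which every vertex has degree exactly 2, let M be a matching in G having no augmenting paths of length ≤ 2K+1, and let v be a vertex not covered by M. Then |X_{2l}(v)| = 2l for every integer l with 1 ≤ l ≤ K/2. -/
/-- A vertex `v` is covered by a set `M` of edges if it lies on some edge of `M`. -/
def coveredBy {V : Type*} (M : Set (Sym2 V)) (v : V) : Prop := ∃ e ∈ M, v ∈ e

/-- `M` is a matching in `G`: a set of edges of `G`, no two of which share a vertex. -/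
def isMatching {V : Type*} (G : SimpleGraph V) (M : Set (Sym2 V)) : Prop :=
  M ⊆ G.edgeSet ∧ ∀ e ∈ M, ∀ f ∈ M, e ≠ f → ∀ v : V, ¬(v ∈ e ∧ v ∈ f)

/-- `p 0, p 1, …, p l` is an `M`-augmenting path of length `l` in `G`:
a path whose endpoints are not covered by `M`, whose edges alternate outside/inside `M`,
beginning and ending with edges outside `M` (so `l` is odd). -/
def isAugPath {V : Type*} (G : SimpleGraph V) (M : Set (Sym2 V)) (p : ℕ → V) (l : ℕ) : Prop :=
  Odd l ∧ (∀ i < l, G.Adj (p i) (p (i+1))) ∧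
  (∀ i ≤ l, ∀ j ≤ l, p i = p j → i = j) ∧
  ¬ coveredBy M (p 0) ∧ ¬ coveredBy M (p l) ∧
  ∀ i < l, (s(p i, p (i+1)) ∈ M ↔ Odd i)

/-- `G` is bipartite: the vertices can be split into a set `A` and its complement so that
every edge has one endpoint in `A` and the other outside `A`. -/
def isBipartite {V : Type*} (G : SimpleGraph V) : Prop :=
  ∃ A : Set V, ∀ v w : V, G.Adj v w → (v ∈ A ↔ w ∉ A)

/-- `N_G(S)`: vertices adjacent in `G` to some vertex of `S`. -/
def NG {V : Type*} (G : SimpleGraph V) (S : Set V) : Set V := {w | ∃ v ∈ S, G.Adj v w}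

/-- `N_M(S)`: vertices joined by an edge of `M` to some vertex of `S`. -/
def NM {V : Type*} (M : Set (Sym2 V)) (S : Set V) : Set V := {w | ∃ v ∈ S, s(v, w) ∈ M}

/-- `Yseq G M S` : `Y_0 = S`, `Y_{2k+1} = N_G(Y_{2k})`, `Y_{2k+2} = N_M(Y_{2k+1})`. -/
def Yseq {V : Type*} (G : SimpleGraph V) (M : Set (Sym2 V)) (S : Set V) : ℕ → Set V
  | 0 => S
  | (l+1) => if Even l then NG G (Yseq G M S l) else NM M (Yseq G M S l)

/-- `Wseq G M x` : `W_0 = {x}`, `W_{2k+1} = N_M(W_{2k})`, `W_{2k+2} = N_G(W_{2k+1})`. -/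
def Wseq {V : Type*} (G : SimpleGraph V) (M : Set (Sym2 V)) (x : V) : ℕ → Set V
  | 0 => {x}
  | (l+1) => if Even l then NM M (Wseq G M x l) else NG G (Wseq G M x l)

/-- The set of edges of the path `p 0, …, p l`. -/
def pathEdges {V : Type*} (p : ℕ → V) (l : ℕ) : Set (Sym2 V) :=
  {e | ∃ i < l, e = s(p i, p (i+1))}

theorem exists_ray {V : Type*} (G : SimpleGraph V)
    (hdeg : ∀ v : V, (G.neighborSet v).ncard = 2) (v a : V) (h : G.Adj v a) :
    ∃ p : ℕ → V, p 0 = v ∧ p 1 = a ∧ (∀ n, G.Adj (p n) (p (n+1))) ∧ ∀ n, p n ≠ p (n+2) := by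
  have H : ∀ u w : V, ∃ x, G.Adj w x ∧ x ≠ u := by
    intro u w
    obtain ⟨x, y, hxy, hs⟩ := Set.ncard_eq_two.1 (hdeg w)
    have hx : G.Adj w x := by
      have : x ∈ G.neighborSet w := by rw [hs]; simp
      exact this
    have hy : G.Adj w y := by
      have : y ∈ G.neighborSet w := by rw [hs]; simp
      exact this
    by_cases hxu : x = u
    · exact ⟨y, hy, fun e => hxy (hxu.trans e.symm)⟩
    · exact ⟨x, hx, hxu⟩
  choose o ho1 ho2 using H
  let q : ℕ → V × V := fun n => Nat.rec (v, a) (fun _ r => (r.2, o r.1 r.2)) n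
  refine ⟨fun n => (q n).1, rfl, rfl, ?_, ?_⟩
  · intro n
    cases n with
    | zero => exact h
    | succ n => exact ho1 (q n).1 (q n).2
  · intro n
    exact (ho2 (q n).1 (q n).2).symm

theorem exists_line {V : Type*} (G : SimpleGraph V)
    (hdeg : ∀ v : V, (G.neighborSet v).ncard = 2) (v : V) :
    ∃ f : ℤ → V, f 0 = v ∧ (∀ i, G.Adj (f i) (f (i+1))) ∧ ∀ i, f i ≠ f (i+2) := by
  obtain ⟨a, b, hab, hs⟩ := Set.ncard_eq_two.1 (hdeg v)
  have ha : G.Adj v a := by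
    have : a ∈ G.neighborSet v := by rw [hs]; simp
    exact this
  have hb : G.Adj v b := by
    have : b ∈ G.neighborSet v := by rw [hs]; simp
    exact this
  obtain ⟨p, p0, p1, pA, pN⟩ := exists_ray G hdeg v a ha
  obtain ⟨q, q0, q1, qA, qN⟩ := exists_ray G hdeg v b hb
  have key : ∀ i : ℤ, (∃ n : ℕ, i = n) ∨ i = -1 ∨ (∃ n : ℕ, i = -(n+2 : ℤ)) := by
    intro i
    by_cases h : 0 ≤ i
    · left; exact ⟨i.toNat, by omega⟩
    · by_cases h1 : i = -1
      · right; left; exact h1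
      · right; right; exact ⟨(-i-2).toNat, by omega⟩
  refine ⟨fun i => if 0 ≤ i then p i.toNat else q (-i).toNat, by simpa using p0, ?_, ?_⟩
  · intro i
    rcases key i with ⟨n, rfl⟩ | rfl | ⟨n, rfl⟩
    · have e1 : ((n:ℤ)).toNat = n := by omega
      have e2 : ((n:ℤ)+1).toNat = n+1 := by omega
      simp only [e1, e2]
      rw [if_pos (by omega), if_pos (by omega)]; exact pA n
    · simp [q1, p0]; exact hb.symm
    · have e1 : (-(-((n:ℤ)+2))).toNat = n+1+1 := by omega
      have e2 : (-(-((n:ℤ)+2)+1)).toNat = n+1 := by omega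
      simp only [e1, e2]
      rw [if_neg (by omega), if_neg (by omega)]; exact (qA (n+1)).symm
  · intro i
    rcases key i with ⟨n, rfl⟩ | rfl | ⟨n, rfl⟩
    · have e1 : ((n:ℤ)).toNat = n := by omega
      have e2 : ((n:ℤ)+2).toNat = n+2 := by omega
      simp only [e1, e2]
      rw [if_pos (by omega), if_pos (by omega)]; exact pN n
    · simp [q1, p1]; exact hab.symm
    · have e1 : (-(-((n:ℤ)+2))).toNat = n+2 := by omega
      have e2 : (-(-((n:ℤ)+2)+2)).toNat = n := by omega
      simp only [e1, e2]
      rw [if_neg (by omega)]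
      by_cases hn : n = 0
      · subst hn
        simp [p0, ← q0]; exact (qN 0).symm
      · rw [if_neg (by omega)]; exact (qN n).symm

theorem line_nbr {V : Type*} [Fintype V] (G : SimpleGraph V)
    (hdeg : ∀ v : V, (G.neighborSet v).ncard = 2) (f : ℤ → V)
    (fA : ∀ i, G.Adj (f i) (f (i+1))) (fN : ∀ i, f i ≠ f (i+2)) (i : ℤ) (w : V) 
    (h : G.Adj (f i) w) : w = f (i-1) ∨ w = f (i+1) := by
  have h1 : G.Adj (f i) (f (i-1)) := by
    have := fA (i-1); rw [sub_add_cancel] at this; exact this.symm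
  have hne : f (i-1) ≠ f (i+1) := by
    have := fN (i-1); rwa [show i-1+2 = i+1 by ring] at this
  have hs : ({f (i-1), f (i+1)} : Set V) = G.neighborSet (f i) := by
    apply Set.eq_of_subset_of_ncard_le
    · rintro x (rfl | rfl)
      · exact h1
      · exact fA i
    · rw [hdeg, Set.ncard_pair hne]
    · exact Set.toFinite _
  have : w ∈ ({f (i-1), f (i+1)} : Set V) := by rw [hs]; exact h
  simpa using this

theorem line_parity {V : Type*} (G : SimpleGraph V) (hbip : isBipartite G) (f : ℤ → V)
    (fA : ∀ i, G.Adj (f i) (f (i+1))) (i : ℤ) (n : ℕ) (h : f i = f (i+n)) : Even n := by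
  obtain ⟨A, hA⟩ := hbip
  have : ∀ n : ℕ, ((f i ∈ A ↔ f (i+n) ∈ A) ↔ Even n) := by
    intro n
    induction n with
    | zero => simp
    | succ n ih =>
      have := hA _ _ (fA (i+n))
      rw [Nat.even_add_one, ← ih]
      push_cast
      rw [← add_assoc]
      tauto
  exact (this n).1 (by rw [h])

theorem line_refl {V : Type*} [Fintype V] (G : SimpleGraph V)
    (hdeg : ∀ v : V, (G.neighborSet v).ncard = 2) (f : ℤ → V)
    (fA : ∀ i, G.Adj (f i) (f (i+1))) (fN : ∀ i, f i ≠ f (i+2)) (k : ℕ) :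
    ∀ i : ℤ, f i = f (i+2*(k+1)) → f (i+1) = f (i+2*(k+1)-1) → False := by
  induction k with
  | zero => intro i h _; exact fN i (by simpa using h)
  | succ k ih =>
    intro i h h'
    push_cast at h h'
    apply ih (i+1)
    · rw [h']; congr 1; ring
    · have := fA (i+1)
      rw [h'] at this
      rcases line_nbr G hdeg f fA fN _ _ this with e | e
      · rw [e]; congr 1; ring
      · exfalso
        apply fN i
        rw [show i + 2 = i+1+1 by ring, e, h]; congr 1; ring

theorem line_step {V : Type*} [Fintype V] (G : SimpleGraph V) (hbip : isBipartite G)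
    (hdeg : ∀ v : V, (G.neighborSet v).ncard = 2) (f : ℤ → V)
    (fA : ∀ i, G.Adj (f i) (f (i+1))) (fN : ∀ i, f i ≠ f (i+2)) (n : ℕ) (i : ℤ)
    (h : f i = f (i+n)) : f (i+1) = f (i+1+n) ∧ f (i-1) = f (i-1+n) := by
  have hp := line_parity G hbip f fA i n h
  by_cases hn : n = 0
  · subst hn; simp
  obtain ⟨k, hk⟩ : ∃ k : ℕ, n = 2*(k+1) := by
    obtain ⟨m, hm⟩ := hp
    exact ⟨m-1, by omega⟩
  have h1 : f (i+1) = f (i+1+n) := by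
    have := fA i
    rw [h] at this
    rcases line_nbr G hdeg f fA fN _ _ this with e | e
    · exfalso
      apply line_refl G hdeg f fA fN k i
      · rw [h, hk]; push_cast; rfl
      · rw [e, hk]; push_cast; rfl
    · rw [e]; congr 1; ring
  refine ⟨h1, ?_⟩
  have := fA (i-1)
  rw [sub_add_cancel, h] at this
  rcases line_nbr G hdeg f fA fN _ _ this.symm with e | e
  · rw [e]; congr 1; ring
  · exfalso
    apply fN (i-1)
    rw [e, show i-1+2 = i+1 by ring, h1]; congr 1; ring

theorem line_period {V : Type*} [Fintype V] (G : SimpleGraph V) (hbip : isBipartite G)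
    (hdeg : ∀ v : V, (G.neighborSet v).ncard = 2) (f : ℤ → V)
    (fA : ∀ i, G.Adj (f i) (f (i+1))) (fN : ∀ i, f i ≠ f (i+2)) (n : ℕ) (i : ℤ)
    (h : f i = f (i+n)) : f 0 = f n := by
  have H := line_step G hbip hdeg f fA fN n
  have : f 0 = f (0 + n) := by
    induction i using Int.induction_on with
    | zero => exact h
    | succ i ih =>
      apply ih
      have := (H _ h).2
      rwa [add_sub_cancel_right] at this
    | pred i ih =>
      apply ih
      have := (H _ h).1
      rwa [sub_add_cancel] at this
  simpa using this

theorem matching_unique {V : Type*} {G : SimpleGraph V} {M : Set (Sym2 V)}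
    (hM : isMatching G M) {x y z : V} (h1 : s(x,y) ∈ M) (h2 : s(x,z) ∈ M) : y = z := by
  by_contra hne
  refine hM.2 _ h1 _ h2 ?_ x ⟨by simp, by simp⟩
  intro e
  rw [Sym2.congr_right] at e
  exact hne e

theorem line_match {V : Type*} [Fintype V] (G : SimpleGraph V) (M : Set (Sym2 V)) (K : ℕ)
    (hdeg : ∀ v : V, (G.neighborSet v).ncard = 2) (hM : isMatching G M)
    (hnoaug : ∀ (p : ℕ → V) (l : ℕ), l ≤ 2 * K + 1 → ¬ isAugPath G M p l)
    (f : ℤ → V) (hv : ¬ coveredBy M (f 0))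
    (fA : ∀ i, G.Adj (f i) (f (i+1))) (fN : ∀ i, f i ≠ f (i+2)) (D : ℕ) (hD : D ≤ 2*K+2)
    (hinj : ∀ i : ℕ, ∀ j : ℕ, i < D → j < D → f i = f j → i = j) (i : ℕ) :
    2 * i + 2 ≤ D → s(f (2*i+1), f (2*i+2)) ∈ M := by
  induction i using Nat.strong_induction_on with
  | _ i ih =>
  intro hi
  have hev : ∀ j ≤ i, s(f (2*j), f (2*j+1)) ∉ M := by
    intro j hj hm
    cases j with
    | zero => exact hv ⟨_, hm, by simp⟩
    | succ j =>
      have h1 := ih j (by omega) (by omega)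
      rw [Sym2.eq_swap] at h1
      have e : (2 * ((j+1 : ℕ) : ℤ)) = 2*j+2 := by push_cast; ring
      rw [e] at hm
      have := matching_unique hM h1 hm
      apply fN (2*j+1)
      rw [this]; congr 1
  have hcov : coveredBy M (f (2*i+1)) := by
    by_contra hc
    apply hnoaug (fun n => f n) (2*i+1) (by omega)
    refine ⟨⟨i, rfl⟩, ?_, ?_, hv, ?_, ?_⟩
    · intro n _; push_cast; exact fA n
    · intro a ha b hb h
      exact hinj a b (by omega) (by omega) h
    · push_cast; exact hc
    · intro n hn
      rcases Nat.even_or_odd' n with ⟨j, rfl | rfl⟩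
      · have := hev j (by omega)
        simp only [Nat.cast_mul, Nat.cast_add, Nat.cast_ofNat, Nat.cast_one]
        simp [this]
      · have := ih j (by omega) (by omega)
        simp only [Nat.cast_mul, Nat.cast_add, Nat.cast_ofNat, Nat.cast_one]
        rw [show (2*(j:ℤ)+1+1) = 2*j+2 by ring]
        simp [this]
  obtain ⟨e, he, hfe⟩ := hcov
  obtain ⟨w, rfl⟩ := hfe
  have hadj : G.Adj (f (2*i+1)) w := hM.1 he
  rcases line_nbr G hdeg f fA fN _ _ hadj with e | e
  · exfalso
    rw [add_sub_cancel_right] at e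
    subst e
    rw [Sym2.eq_swap] at he
    exact hev i le_rfl he
  · rw [e, show (2*(i:ℤ)+1+1) = 2*i+2 by ring] at he
    exact he

theorem line_inj {V : Type*} [Fintype V] (G : SimpleGraph V) (M : Set (Sym2 V)) (K : ℕ)
    (hbip : isBipartite G)
    (hdeg : ∀ v : V, (G.neighborSet v).ncard = 2) (hM : isMatching G M)
    (hnoaug : ∀ (p : ℕ → V) (l : ℕ), l ≤ 2 * K + 1 → ¬ isAugPath G M p l)
    (f : ℤ → V) (hv : ¬ coveredBy M (f 0))
    (fA : ∀ i, G.Adj (f i) (f (i+1))) (fN : ∀ i, f i ≠ f (i+2)) (d : ℕ) :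
    d ≤ 2*K+2 → 0 < d → f 0 ≠ f d := by
  induction d using Nat.strong_induction_on with
  | _ d ih =>
  intro hd hpos h
  have hp := line_parity G hbip f fA 0 d (by simpa using h)
  have hlt : ∀ i j : ℕ, i < j → j < d → f i ≠ f j := by
    intro i j hij hj e
    apply ih (j-i) (by omega) (by omega) (by omega)
    apply line_period G hbip hdeg f fA fN (j-i) i
    rw [e]; congr 1; omega
  obtain ⟨m, hm⟩ := hp
  have := line_match G M K hdeg hM hnoaug f hv fA fN d hd (by
    intro i j hi hj e
    rcases lt_trichotomy i j with h | h | h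
    · exact absurd e (hlt i j h hj)
    · exact h
    · exact absurd e.symm (hlt j i h hi)) (m-1) (by omega)
  rw [show (2*((m-1:ℕ):ℤ)+2) = d by omega, ← h] at this
  exact hv ⟨_, this, by simp⟩

theorem stmt4 {V : Type*} [Fintype V] (G : SimpleGraph V) (M : Set (Sym2 V))
    (K : ℕ) (hK2 : 2 ≤ K) (hKeven : Even K)
    (hbip : isBipartite G)
    (hdeg : ∀ v : V, (G.neighborSet v).ncard = 2)
    (hM : isMatching G M)
    (hnoaug : ∀ (p : ℕ → V) (l : ℕ), l ≤ 2 * K + 1 → ¬ isAugPath G M p l)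
    (v : V) (hv : ¬ coveredBy M v) :
    ∀ l : ℕ, 1 ≤ l → l ≤ K / 2 → (Yseq G M {v} (2 * l)).ncard = 2 * l := by
  obtain ⟨f, rfl, fA, fN⟩ := exists_line G hdeg v
  have hlt : ∀ i j : ℤ, i < j → j ≤ i + (2*K+2) → f i ≠ f j := by
    intro i j h1 h2 e
    apply line_inj G M K hbip hdeg hM hnoaug f hv fA fN (j-i).toNat (by omega) (by omega)
    apply line_period G hbip hdeg f fA fN _ i
    rw [e]; congr 1; omega
  have hinj : ∀ i j : ℤ, j ≤ i + (2*K+2) → i ≤ j + (2*K+2) → f i = f j → i = j := by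
    intro i j h1 h2 e
    rcases lt_trichotomy i j with h | h | h
    · exact absurd e (hlt i j h h1)
    · exact h
    · exact absurd e.symm (hlt j i h h2)
  have mpos : ∀ i : ℕ, i ≤ K → s(f (2*i+1), f (2*i+2)) ∈ M := by
    intro i hi
    exact line_match G M K hdeg hM hnoaug f hv fA fN (2*K+2) le_rfl (by
      intro a b ha hb e
      have := hinj a b (by omega) (by omega) e
      omega) i (by omega)
  have mneg : ∀ i : ℕ, i ≤ K → s(f (-(2*i+1)), f (-(2*i+2))) ∈ M := by
    intro i hi
    refine line_match G M K hdeg hM hnoaug (fun n => f (-n)) (by simpa using hv) ?_ ?_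
      (2*K+2) le_rfl ?_ i (by omega)
    · intro n
      have := fA (-(n+1))
      rw [show -(n+1)+1 = -n by ring] at this
      exact this.symm
    · intro n
      have := fN (-(n+2))
      rw [show -(n+2)+2 = -n by ring] at this
      exact this.symm
    · intro a b ha hb e
      have := hinj (-a) (-b) (by omega) (by omega) e
      omega
  have hadj' : ∀ i, G.Adj (f i) (f (i-1)) := by
    intro i
    have := fA (i-1); rw [sub_add_cancel] at this; exact this.symm
  have hnbr := line_nbr G hdeg f fA fN
  have e1 : ∀ l, Yseq G M {f 0} (2*l+1) = NG G (Yseq G M {f 0} (2*l)) := by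
    intro l; rw [Yseq]; simp
  have e2 : ∀ l, Yseq G M {f 0} (2*(l+1)) = NM M (Yseq G M {f 0} (2*l+1)) := by
    intro l; rw [show 2*(l+1) = (2*l+1)+1 by ring, Yseq]; simp [Nat.even_add_one]
  have ST : ∀ l : ℕ, l ≤ K → ∀ w, w ∈ Yseq G M {f 0} (2*l+1) ↔
      ∃ i : ℤ, -(l+1) ≤ i ∧ i ≤ l ∧ w = f (2*i+1) := by
    intro l
    induction l with
    | zero =>
      intro _ w
      rw [e1]
      constructor
      · rintro ⟨x, hx, hxw⟩
        have hx : x = f 0 := hx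
        subst hx
        rcases hnbr _ _ hxw with e | e
        · exact ⟨-1, by simp, by simp, by rw [e]; congr 1⟩
        · exact ⟨0, by simp, by simp, by rw [e]; congr 1⟩
      · rintro ⟨i, h1, h2, rfl⟩
        refine ⟨f 0, rfl, ?_⟩
        have : i = -1 ∨ i = 0 := by push_cast at *; omega
        rcases this with rfl | rfl
        · exact hadj' 0
        · exact fA 0
    | succ l ih =>
      intro hl w
      have ih := ih (by omega)
      rw [e1, e2]
      constructor
      · rintro ⟨x, ⟨y, hy, hyx⟩, hxw⟩
        obtain ⟨i, h1, h2, rfl⟩ := (ih y).1 hy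
        rcases hnbr _ _ (hM.1 hyx : G.Adj _ _) with e | e
        all_goals
          subst e
          rcases hnbr _ _ hxw with e | e
        · exact ⟨i-1, by push_cast; omega, by push_cast; omega, by rw [e]; congr 1; ring⟩
        · exact ⟨i, by push_cast; omega, by push_cast; omega, by rw [e]; congr 1; ring⟩
        · exact ⟨i, by push_cast; omega, by push_cast; omega, by rw [e]; congr 1; ring⟩
        · exact ⟨i+1, by push_cast; omega, by push_cast; omega, by rw [e]; congr 1; ring⟩
      · rintro ⟨i, h1, h2, rfl⟩
        push_cast at h1 h2
        have P : ∀ j : ℕ, j ≤ l → f (2*j+2) ∈ NM M (Yseq G M {f 0} (2*l+1)) := by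
          intro j hj
          exact ⟨f (2*j+1), (ih _).2 ⟨j, by omega, by omega, rfl⟩, mpos j (by omega)⟩
        have Q : ∀ j : ℕ, j ≤ l → f (-(2*j+2)) ∈ NM M (Yseq G M {f 0} (2*l+1)) := by
          intro j hj
          exact ⟨f (-(2*j+1)), (ih _).2 ⟨-j-1, by omega, by omega, by congr 1; ring⟩,
            mneg j (by omega)⟩
        rcases (by omega : i = 0 ∨ i = -1 ∨ 1 ≤ i ∨ i ≤ -2) with h | h | h | h
        · subst h
          exact ⟨_, P 0 (by omega), hadj' 2⟩
        · subst h
          exact ⟨_, Q 0 (by omega), fA (-2)⟩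
        · refine ⟨_, P (i-1).toNat (by omega), ?_⟩
          rw [show (2*((i-1).toNat:ℤ)+2) = 2*i by omega]
          exact fA _
        · refine ⟨_, Q (-i-2).toNat (by omega), ?_⟩
          rw [show -(2*((-i-2).toNat:ℤ)+2) = 2*i+1+1 by omega]
          exact (fA _).symm
  intro l hl1 hl
  obtain ⟨l, rfl⟩ : ∃ k, l = k+1 := ⟨l-1, by omega⟩
  have hS : Yseq G M {f 0} (2*(l+1)) =
      (fun i : ℤ => f (2*i)) '' (((Finset.Icc (-(l+1:ℤ)) (l+1)).erase 0 : Finset ℤ) : Set ℤ) := by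
    rw [e2]
    ext w
    constructor
    · rintro ⟨x, hx, hxw⟩
      obtain ⟨i, h1, h2, rfl⟩ := (ST l (by omega) x).1 hx
      by_cases hi : 0 ≤ i
      · have := mpos i.toNat (by omega)
        rw [show (i.toNat : ℤ) = i by omega] at this
        refine ⟨i+1, by simp; omega, ?_⟩
        rw [matching_unique hM hxw this]; simp only []; congr 1; ring
      · have := mneg (-i-1).toNat (by omega)
        rw [show -(2*((-i-1).toNat : ℤ)+1) = 2*i+1 by omega,
          show -(2*((-i-1).toNat : ℤ)+2) = 2*i by omega] at this
        refine ⟨i, by simp; omega, ?_⟩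
        rw [matching_unique hM hxw this]
    · rintro ⟨i, hi, rfl⟩
      simp at hi
      by_cases h0 : 0 < i
      · have := mpos (i-1).toNat (by omega)
        rw [show (2*((i-1).toNat : ℤ)+2) = 2*i by omega] at this
        exact ⟨_, (ST l (by omega) _).2 ⟨((i-1).toNat : ℤ), by omega, by omega, rfl⟩, this⟩
      · have := mneg (-i-1).toNat (by omega)
        rw [show -(2*((-i-1).toNat : ℤ)+1) = 2*i+1 by omega,
          show -(2*((-i-1).toNat : ℤ)+2) = 2*i by omega] at this
        exact ⟨_, (ST l (by omega) _).2 ⟨i, by omega, by omega, rfl⟩, this⟩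
  rw [hS, Set.ncard_image_of_injOn, Set.ncard_coe_finset, Finset.card_erase_of_mem, Int.card_Icc]
  · omega
  · simp; omega
  · intro a ha b hb e
    simp at ha hb
    have := hinj _ _ (by omega) (by omega) e
    omega
end

section
/- Let K ≥ 2 be an even integer, let G be a finite simple bipartite graph in which every vertex has degree exactly 2, let M be a matching in G having no augmenting paths of length ≤ 2K+1, let v be a vertex not covered by M, and let x and y be the two distinct neighbors of v in G. Then the sets ⋃_{l=0}^{K−1} W_l(x) and ⋃_{l=0}^{K−1} W_l(y) are disjoint. -/
theorem match_unique {V : Type*} {G : SimpleGraph V} {M : Set (Sym2 V)} (hM : isMatching G M)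
    {a b c : V} (h1 : s(a, b) ∈ M) (h2 : s(a, c) ∈ M) : b = c := by
  by_contra h
  refine hM.2 _ h1 _ h2 ?_ a ⟨by simp, by simp⟩
  intro h'
  rw [Sym2.congr_right] at h'
  exact h h'

theorem exists_other {V : Type*} {G : SimpleGraph V}
    (hdeg : ∀ v : V, (G.neighborSet v).ncard = 2) (u w : V) (h : G.Adj u w) :
    ∃ z, G.Adj w z ∧ z ≠ u ∧ ∀ t, G.Adj w t → t = u ∨ t = z := by
  obtain ⟨a, b, hab, he⟩ := Set.ncard_eq_two.1 (hdeg w)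
  have key : ∀ t, G.Adj w t ↔ t = a ∨ t = b := by
    intro t
    have : t ∈ G.neighborSet w ↔ t ∈ ({a, b} : Set V) := by rw [he]
    simpa using this
  rcases (key u).1 h.symm with rfl | rfl
  · exact ⟨b, (key b).2 (Or.inr rfl), hab.symm, fun t ht => (key t).1 ht⟩
  · exact ⟨a, (key a).2 (Or.inl rfl), hab, fun t ht => ((key t).1 ht).symm⟩

theorem exists_walk {V : Type*} {G : SimpleGraph V}
    (hdeg : ∀ v : V, (G.neighborSet v).ncard = 2) (v x : V) (h : G.Adj v x) :
    ∃ p : ℕ → V, p 0 = v ∧ p 1 = x ∧ (∀ i, G.Adj (p i) (p (i+1))) ∧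
      (∀ i, p (i+2) ≠ p i) ∧ ∀ i t, G.Adj (p (i+1)) t → t = p i ∨ t = p (i+2) := by
  have h1 : ∀ d : {d : V × V // G.Adj d.1 d.2}, ∃ e : {d : V × V // G.Adj d.1 d.2},
      e.1.1 = d.1.2 ∧ e.1.2 ≠ d.1.1 ∧ ∀ t, G.Adj d.1.2 t → t = d.1.1 ∨ t = e.1.2 := by
    rintro ⟨⟨u, w⟩, hd⟩
    obtain ⟨z, hz, hz1, hz2⟩ := exists_other hdeg u w hd
    exact ⟨⟨(w, z), hz⟩, rfl, hz1, hz2⟩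
  choose f hf1 hf2 hf3 using h1
  let d : ℕ → {d : V × V // G.Adj d.1 d.2} := fun n => f^[n] ⟨(v, x), h⟩
  have hd : ∀ n, d (n+1) = f (d n) := fun n => Function.iterate_succ_apply' f n _
  have hs : ∀ n, (d (n+1)).1.1 = (d n).1.2 := fun n => by rw [hd, hf1]
  refine ⟨fun n => (d n).1.1, rfl, ?_, ?_, ?_, ?_⟩
  · exact hs 0
  · intro i
    simp only [hs]
    exact (d i).2
  · intro i
    have := hf2 (d i)
    rw [← hd, ← hs (i+1)] at this
    exact this
  · intro i t ht
    have := hf3 (d i) t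
    rw [← hd, ← hs (i+1), ← hs i] at this
    exact this ht

theorem walk_parity {V : Type*} {G : SimpleGraph V} {A : Set V}
    (hA : ∀ v w : V, G.Adj v w → (v ∈ A ↔ w ∉ A)) (p : ℕ → V)
    (hadj : ∀ i, G.Adj (p i) (p (i+1))) (n : ℕ) : p n ∈ A ↔ (p 0 ∈ A ↔ Even n) := by
  induction n with
  | zero => simp
  | succ n ih =>
    have := hA _ _ (hadj n)
    rw [Nat.even_add_one]
    tauto

theorem walk_alt {V : Type*} {G : SimpleGraph V} {M : Set (Sym2 V)} {K : ℕ} {A : Set V}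
    (hA : ∀ v w : V, G.Adj v w → (v ∈ A ↔ w ∉ A))
    (hM : isMatching G M)
    (hnoaug : ∀ (p : ℕ → V) (l : ℕ), l ≤ 2 * K + 1 → ¬ isAugPath G M p l)
    (p : ℕ → V) (hv : ¬ coveredBy M (p 0))
    (hadj : ∀ i, G.Adj (p i) (p (i+1))) (hne : ∀ i, p (i+2) ≠ p i)
    (hnb : ∀ i t, G.Adj (p (i+1)) t → t = p i ∨ t = p (i+2)) (k : ℕ) (hk : k ≤ K + 1) :
    (∀ i < k, s(p (2*i+1), p (2*i+2)) ∈ M) ∧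
    (∀ i ≤ k, ∀ j < i, p (2*i+1) ≠ p (2*j+1) ∧ p (2*i) ≠ p (2*j)) := by
  have par : ∀ i j, p i = p j → (Even i ↔ Even j) := by
    intro i j h
    have h1 := walk_parity hA p hadj i
    have h2 := walk_parity hA p hadj j
    rw [h] at h1
    tauto
  induction k with
  | zero => exact ⟨by simp, by intro i hi j hj; omega⟩
  | succ k ih =>
    obtain ⟨ihM, ihI⟩ := ih (by omega)
    -- nonmatching edges
    have hnon : ∀ i ≤ k, s(p (2*i), p (2*i+1)) ∉ M := by
      intro i hi hmem
      rcases i with _ | i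
      · exact hv ⟨_, hmem, by simp⟩
      · have h1 := ihM i (by omega)
        rw [Sym2.eq_swap] at h1
        have := match_unique hM h1 hmem
        exact hne _ this.symm
    have hcov : coveredBy M (p (2*k+1)) := by
      by_contra hc
      refine hnoaug p (2*k+1) (by omega) ⟨⟨k, rfl⟩, fun i _ => hadj i, ?_, hv, hc, ?_⟩
      · intro i hi j hj hij
        have hp := par i j hij
        rcases Nat.even_or_odd' i with ⟨a, rfl | rfl⟩ <;>
        rcases Nat.even_or_odd' j with ⟨b, rfl | rfl⟩
        · rcases lt_trichotomy a b with h | h | h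
          · exact absurd hij.symm (ihI b (by omega) a h).2
          · rw [h]
          · exact absurd hij (ihI a (by omega) b h).2
        · simp [Nat.even_add_one] at hp
        · simp [Nat.even_add_one] at hp
        · rcases lt_trichotomy a b with h | h | h
          · exact absurd hij.symm (ihI b (by omega) a h).1
          · rw [h]
          · exact absurd hij (ihI a (by omega) b h).1
      · intro i hi
        rcases Nat.even_or_odd' i with ⟨a, rfl | rfl⟩
        · have := hnon a (by omega)
          simp [this]
        · have := ihM a (by omega)
          simp [this]
    have hnew : s(p (2*k+1), p (2*k+2)) ∈ M := by
      obtain ⟨e, he, hpe⟩ := hcov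
      obtain ⟨u, rfl⟩ := hpe
      have hadj' : G.Adj (p (2*k+1)) u := hM.1 he
      rcases hnb _ _ hadj' with rfl | rfl
      · rw [Sym2.eq_swap] at he
        exact absurd he (hnon k le_rfl)
      · exact he
    have hM' : ∀ i < k+1, s(p (2*i+1), p (2*i+2)) ∈ M := by
      intro i hi
      rcases Nat.lt_succ_iff_lt_or_eq.1 hi with h | rfl
      · exact ihM i h
      · exact hnew
    have hev : ∀ j < k+1, p (2*(k+1)) ≠ p (2*j) := by
      intro j hj h
      change p (2*k+2) = _ at h
      rcases j with _ | j
      · refine hv ⟨_, hnew, ?_⟩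
        rw [h]; simp
      · have h1 := ihM j (by omega)
        rw [Sym2.eq_swap] at h1
        have h2 := hnew
        rw [Sym2.eq_swap, h] at h2
        have := match_unique hM h2 h1
        exact (ihI k le_rfl j (by omega)).1 this
    refine ⟨hM', ?_⟩
    intro i hi j hj
    rcases Nat.le_succ_iff.1 hi with h | rfl
    · exact ihI i h j hj
    refine ⟨?_, hev j hj⟩
    intro h
    have ha := (hadj (2*(k+1))).symm
    rw [h] at ha
    rcases hnb _ _ ha with h' | h'
    · exact hev j hj h'
    · by_cases hjk : j = k
      · subst hjk
        exact hne _ h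
      · exact hev (j+1) (by omega) h'

theorem W_sub {V : Type*} {G : SimpleGraph V} {M : Set (Sym2 V)} {K : ℕ}
    (hM : isMatching G M) (p : ℕ → V)
    (hnb : ∀ i t, G.Adj (p (i+1)) t → t = p i ∨ t = p (i+2))
    (hm : ∀ i < K + 1, s(p (2*i+1), p (2*i+2)) ∈ M) (l : ℕ) (hl : l < K) (z : V)
    (hz : z ∈ Wseq G M (p 1) l) : ∃ i ≤ l, (Even i ↔ Even l) ∧ z = p (i+1) := by
  induction l generalizing z with
  | zero => exact ⟨0, le_rfl, Iff.rfl, hz⟩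
  | succ l ih =>
    rw [Wseq] at hz
    split_ifs at hz with he
    · obtain ⟨w, hw, hwz⟩ := hz
      obtain ⟨i, hi, hp, rfl⟩ := ih (by omega) w hw
      obtain ⟨a, rfl | rfl⟩ := Nat.even_or_odd' i
      · refine ⟨2*a+1, by omega, by simp [Nat.even_add_one, he], ?_⟩
        exact match_unique hM hwz (hm a (by omega))
      · simp [Nat.even_add_one, he] at hp
    · obtain ⟨w, hw, hwz⟩ := hz
      obtain ⟨i, hi, hp, rfl⟩ := ih (by omega) w hw
      obtain ⟨a, rfl | rfl⟩ := Nat.even_or_odd' i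
      · simp [he] at hp
      · rcases hnb _ _ hwz with rfl | rfl
        · exact ⟨2*a, by omega, by simp [Nat.even_add_one, he], rfl⟩
        · exact ⟨2*a+2, by omega, by simp [Nat.even_add_one, he], rfl⟩

/-- In a finite 2-regular bipartite graph with matching `M` having no augmenting
paths of length ≤ 2K+1 (K ≥ 2 even), if `v` is uncovered and `x ≠ y` are its two neighbors,
then `⋃_{l=0}^{K-1} W_l(x)` and `⋃_{l=0}^{K-1} W_l(y)` are disjoint. -/
theorem stmt5 {V : Type*} [Fintype V] (G : SimpleGraph V) (M : Set (Sym2 V))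
    (K : ℕ) (hK2 : 2 ≤ K) (hKeven : Even K)
    (hbip : isBipartite G)
    (hdeg : ∀ v : V, (G.neighborSet v).ncard = 2)
    (hM : isMatching G M)
    (hnoaug : ∀ (p : ℕ → V) (l : ℕ), l ≤ 2 * K + 1 → ¬ isAugPath G M p l)
    (v x y : V) (hv : ¬ coveredBy M v)
    (hxy : x ≠ y) (hx : G.Adj v x) (hy : G.Adj v y) :
    Disjoint (⋃ l ∈ Finset.range K, Wseq G M x l)
             (⋃ l ∈ Finset.range K, Wseq G M y l) := by
  obtain ⟨A, hA⟩ := hbip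
  obtain ⟨p, hp0, hp1, pa, pn, pb⟩ := exists_walk hdeg v x hx
  obtain ⟨q, hq0, hq1, qa, qn, qb⟩ := exists_walk hdeg v y hy
  have pM := (walk_alt hA hM hnoaug p (hp0 ▸ hv) pa pn pb (K+1) le_rfl).1
  have qM := (walk_alt hA hM hnoaug q (hq0 ▸ hv) qa qn qb (K+1) le_rfl).1
  have hodd : ∀ i j, i < K + 1 → j < K + 1 → p (2*i+1) ≠ q (2*j+1) := by
    intro i
    induction i with
    | zero =>
      intro j _ hj h
      have h1 := pM 0 (by omega)
      have h2 := qM j hj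
      rw [h] at h1
      have h3 := match_unique hM h1 h2
      have ha := (pa 0).symm
      rw [h] at ha
      rcases qb _ _ ha with h4 | h4
      · rcases j with _ | j
        · exact hxy (by rw [← hp1, ← hq1]; exact h)
        · refine hv ⟨_, qM j (by omega), ?_⟩
          rw [← hp0, h4]
          exact Sym2.mem_mk_right _ _
      · exact pn 0 (h3.trans h4.symm)
    | succ i ih =>
      intro j hi hj h
      have h1 := pM (i+1) hi
      have h2 := qM j hj
      rw [h] at h1
      have h3 := match_unique hM h1 h2
      have ha := (pa (2*(i+1))).symm
      rw [h] at ha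
      have hpm := pM i (by omega)
      rcases qb _ _ ha with h4 | h4
      · rcases j with _ | j
        · refine hv ⟨_, hpm, ?_⟩
          rw [← hq0, ← h4]
          exact Sym2.mem_mk_right _ _
        · have hqm := qM j (by omega)
          change p (2*i+2) = q (2*j+2) at h4
          rw [Sym2.eq_swap, h4] at hpm
          rw [Sym2.eq_swap] at hqm
          exact ih j (by omega) (by omega) (match_unique hM hpm hqm)
      · exact pn _ (h3.trans h4.symm)
  rw [Set.disjoint_left]
  intro z hz1 hz2
  simp only [Set.mem_iUnion, Finset.mem_range, exists_prop] at hz1 hz2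
  obtain ⟨l, hl, hz1⟩ := hz1
  obtain ⟨m, hm, hz2⟩ := hz2
  rw [← hp1] at hz1
  rw [← hq1] at hz2
  obtain ⟨i, hi, -, rfl⟩ := W_sub hM p pb pM l hl z hz1
  obtain ⟨j, hj, -, h⟩ := W_sub hM q qb qM m hm _ hz2
  have par : Even i ↔ Even j := by
    have h1 := walk_parity hA p pa (i+1)
    have h2 := walk_parity hA q qa (j+1)
    rw [h, hp0] at h1
    rw [hq0] at h2
    rw [Nat.even_add_one] at h1 h2
    tauto
  obtain ⟨a, rfl | rfl⟩ := Nat.even_or_odd' i <;> obtain ⟨b, rfl | rfl⟩ := Nat.even_or_odd' j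
  · exact hodd a b (by omega) (by omega) h
  · simp [Nat.even_add_one] at par
  · simp [Nat.even_add_one] at par
  · have h1 := pM a (by omega)
    have h2 := qM b (by omega)
    change p (2*a+2) = q (2*b+2) at h
    rw [Sym2.eq_swap, h] at h1
    rw [Sym2.eq_swap] at h2
    exact hodd a b (by omega) (by omega) (match_unique hM h1 h2)
end

section
/- Let K ≥ 2 be an even integer, let G be a finite simple bipartite graph in which every vertex has degree exactly 2, let M be a matching in G having no augmenting paths of length ≤ 2K+1, and let v and v' be two distinct vertices not covered by M. Then X_l(v) and X_l(v') are disjoint for every l with 0 ≤ l ≤ K. -/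
theorem yy_even {V : Type*} {G : SimpleGraph V} {M : Set (Sym2 V)} {S : Set V} {k : ℕ} {x : V}
    (h : x ∈ Yseq G M S (2*(k+1))) :
    ∃ a b, b ∈ Yseq G M S (2*k) ∧ G.Adj b a ∧ s(a, x) ∈ M := by
  have e : 2*(k+1) = (2*k+1)+1 := by ring
  rw [e] at h
  simp only [Yseq] at h
  rw [if_neg (by simp), if_pos (by simp)] at h
  obtain ⟨a, ⟨b, hb, hba⟩, ha⟩ := h
  exact ⟨a, b, hb, hba, ha⟩

theorem yy_even_mk {V : Type*} {G : SimpleGraph V} {M : Set (Sym2 V)} {S : Set V} {k : ℕ} {x a b : V}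
    (hb : b ∈ Yseq G M S (2*k)) (hba : G.Adj b a) (ha : s(a, x) ∈ M) :
    x ∈ Yseq G M S (2*(k+1)) := by
  have e : 2*(k+1) = (2*k+1)+1 := by ring
  rw [e]
  simp only [Yseq]
  rw [if_neg (by simp), if_pos (by simp)]
  exact ⟨a, ⟨b, hb, hba⟩, ha⟩

theorem yy_odd {V : Type*} {G : SimpleGraph V} {M : Set (Sym2 V)} {S : Set V} {k : ℕ} {x : V}
    (h : x ∈ Yseq G M S (2*k+1)) : ∃ b, b ∈ Yseq G M S (2*k) ∧ G.Adj b x := by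
  simp only [Yseq] at h
  rw [if_pos (by simp)] at h
  exact h

theorem mate_unique {V : Type*} {G : SimpleGraph V} {M : Set (Sym2 V)} (hM : isMatching G M)
    {a x y : V} (h1 : s(a, x) ∈ M) (h2 : s(a, y) ∈ M) : x = y := by
  by_contra hne
  refine hM.2 _ h1 _ h2 ?_ a (by simp)
  intro h
  exact hne (Sym2.congr_right.1 h)

theorem nbr3 {V : Type*} [Fintype V] {G : SimpleGraph V}
    (hdeg : ∀ v : V, (G.neighborSet v).ncard = 2) {a x b c : V}
    (hx : G.Adj a x) (hb : G.Adj a b) (hc : G.Adj a c) : b = c ∨ b = x ∨ c = x := by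
  obtain ⟨u, w, -, h⟩ := Set.ncard_eq_two.1 (hdeg a)
  have hh : ∀ z, G.Adj a z → z = u ∨ z = w := by
    intro z hz
    have : z ∈ G.neighborSet a := hz
    rw [h] at this
    simpa using this
  have := hh x hx
  have := hh b hb
  have := hh c hc
  grind

theorem even_disj {V : Type*} [Fintype V] {G : SimpleGraph V} {M : Set (Sym2 V)}
    (hdeg : ∀ v : V, (G.neighborSet v).ncard = 2)
    (hM : isMatching G M) {v v' : V} (hvv' : v ≠ v')
    (hv : ¬ coveredBy M v) (hv' : ¬ coveredBy M v') :
    ∀ n j k : ℕ, j + k = n → ∀ x, x ∈ Yseq G M {v} (2*j) → x ∈ Yseq G M {v'} (2*k) → False := by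
  intro n
  induction n using Nat.strong_induction_on with
  | _ n ih =>
    intro j k hn x hx hx'
    rcases j with _ | j
    · have hxv : x = v := by simpa [Yseq] using hx
      subst hxv
      rcases k with _ | k
      · exact hvv' (by simpa [Yseq] using hx')
      · obtain ⟨a, b, -, -, h⟩ := yy_even hx'
        exact hv ⟨_, h, by simp⟩
    · rcases k with _ | k
      · have hxv : x = v' := by simpa [Yseq] using hx'
        subst hxv
        obtain ⟨a, b, -, -, h⟩ := yy_even hx
        exact hv' ⟨_, h, by simp⟩
      · obtain ⟨a, b, hb, hba, ha⟩ := yy_even hx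
        obtain ⟨a', b', hb', hba', ha'⟩ := yy_even hx'
        have : a = a' := by
          rw [Sym2.eq_swap] at ha ha'
          exact mate_unique hM ha ha'
        subst this
        have hax : G.Adj a x := hM.1 ha
        rcases nbr3 hdeg hax hba.symm hba'.symm with h | h | h
        · subst h
          exact ih (j+k) (by omega) j k rfl b hb hb'
        · subst h
          exact ih (j+(k+1)) (by omega) j (k+1) rfl b hb hx'
        · subst h
          exact ih ((j+1)+k) (by omega) (j+1) k rfl b' hx hb'

/-- simple alternating path of length `l` starting at `v`. -/
def altPath {V : Type*} (G : SimpleGraph V) (M : Set (Sym2 V)) (v : V) (p : ℕ → V) (l : ℕ) : Prop :=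
  p 0 = v ∧ (∀ i < l, G.Adj (p i) (p (i+1))) ∧
  (∀ i ≤ l, ∀ j ≤ l, p i = p j → i = j) ∧
  ∀ i < l, (s(p i, p (i+1)) ∈ M ↔ Odd i)

theorem altPath.side {V : Type*} {G : SimpleGraph V} {M : Set (Sym2 V)} {v : V} {p : ℕ → V} {l : ℕ}
    (h : altPath G M v p l) {A : Set V} (hA : ∀ v w : V, G.Adj v w → (v ∈ A ↔ w ∉ A)) :
    ∀ i ≤ l, (p i ∈ A ↔ (v ∈ A ↔ Even i)) := by
  intro i
  induction i with
  | zero => intro _; simp [h.1]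
  | succ i ih =>
    intro hi
    have h1 := ih (by omega)
    have h2 := hA _ _ (h.2.1 i (by omega))
    rw [Nat.even_add_one]
    tauto

theorem altPath.trunc {V : Type*} {G : SimpleGraph V} {M : Set (Sym2 V)} {v : V} {p : ℕ → V} {l : ℕ}
    (h : altPath G M v p l) {m : ℕ} (hm : m ≤ l) : altPath G M v p m :=
  ⟨h.1, fun i hi => h.2.1 i (by omega), fun i hi j hj => h.2.2.1 i (by omega) j (by omega),
    fun i hi => h.2.2.2 i (by omega)⟩

theorem altPath.ext {V : Type*} {G : SimpleGraph V} {M : Set (Sym2 V)} {v : V} {p : ℕ → V} {l : ℕ}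
    (h : altPath G M v p l) {a : V} (ha : G.Adj (p l) a) (hM : s(p l, a) ∈ M ↔ Odd l)
    (hn : ∀ i ≤ l, p i ≠ a) :
    altPath G M v (fun i => if i ≤ l then p i else a) (l+1) := by
  obtain ⟨h0, h1, h2, h3⟩ := h
  refine ⟨by simpa using h0, ?_, ?_, ?_⟩
  · intro i hi
    rcases Nat.lt_succ_iff_lt_or_eq.1 hi with hi | rfl
    · simpa [hi.le, Nat.succ_le_of_lt hi] using h1 i hi
    · simpa using ha
  · intro i hi j hj hij
    by_cases hi' : i ≤ l <;> by_cases hj' : j ≤ l <;> simp only [hi', hj', if_true, if_false] at hij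
    · exact h2 i hi' j hj' hij
    · exact absurd hij (hn i hi')
    · exact absurd hij.symm (hn j hj')
    · omega
  · intro i hi
    rcases Nat.lt_succ_iff_lt_or_eq.1 hi with hi | rfl
    · simpa [hi.le, Nat.succ_le_of_lt hi] using h3 i hi
    · simpa using hM

theorem exists_alt {V : Type*} {G : SimpleGraph V} {M : Set (Sym2 V)}
    (hM : isMatching G M) {A : Set V} (hA : ∀ v w : V, G.Adj v w → (v ∈ A ↔ w ∉ A)) (v : V) :
    ∀ k : ℕ, ∀ y ∈ Yseq G M {v} (2*k), ∃ p j, j ≤ k ∧ altPath G M v p (2*j) ∧ p (2*j) = y := by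
  intro k
  induction k with
  | zero =>
    intro y hy
    have hy : y = v := by simpa [Yseq] using hy
    subst hy
    exact ⟨fun _ => y, 0, le_rfl, ⟨rfl, by simp, by intro i hi j hj _; omega, by simp⟩, rfl⟩
  | succ k ih =>
    intro y hy
    obtain ⟨a, b, hb, hba, ha⟩ := yy_even hy
    obtain ⟨p, j, hj, hp, hpb⟩ := ih b hb
    have hay : G.Adj a y := hM.1 ha
    have s1 := hA _ _ hba
    have s2 := hA _ _ hay
    have s3 := hp.side hA (2*j) le_rfl
    have ev : Even (2*j) := by simp
    rw [hpb] at s3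
    by_cases hyp : ∃ i ≤ 2*j, p i = y
    · obtain ⟨i, hi, hpi⟩ := hyp
      have s4 := hp.side hA i hi
      rw [hpi] at s4
      have : Even i := by tauto
      obtain ⟨m, hm⟩ := this
      have hm : i = 2*m := by omega
      subst hm
      exact ⟨p, m, by omega, hp.trunc hi, hpi⟩
    · push Not at hyp
      have han : ∀ i ≤ 2*j, p i ≠ a := by
        intro i hi hpi
        have s4 := hp.side hA i hi
        rw [hpi] at s4
        have hne : ¬ Even i := by tauto
        have ho : Odd i := Nat.not_even_iff_odd.1 hne
        have hlt : i < 2*j := lt_of_le_of_ne hi (by rintro rfl; exact hne ev)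
        have hm := (hp.2.2.2 i hlt).2 ho
        rw [hpi] at hm
        exact hyp (i+1) hlt (mate_unique hM hm ha)
      have hbm : s(p (2*j), a) ∉ M := by
        intro hm
        rw [Sym2.eq_swap] at hm
        exact hyp (2*j) le_rfl (mate_unique hM hm ha)
      have q1 := hp.ext (a := a) (by rw [hpb]; exact hba)
        (by simp [hbm]) han
      have q2 := q1.ext (a := y) (by simpa using hay) (by simpa using ha) (by
        intro i hi
        by_cases h : i ≤ 2*j
        · simpa [h] using hyp i h
        · simpa [h] using hay.ne)
      exact ⟨_, j+1, by omega, q2, by simp [mul_add]⟩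

theorem exists_aug {V : Type*} {G : SimpleGraph V} {M : Set (Sym2 V)}
    (hM : isMatching G M) (hbip : isBipartite G) {v x : V} {k : ℕ}
    (hv : ¬ coveredBy M v) (hx : ¬ coveredBy M x) (h : x ∈ Yseq G M {v} (2*k+1)) :
    ∃ p l, l ≤ 2*k+1 ∧ isAugPath G M p l := by
  obtain ⟨A, hA⟩ := hbip
  obtain ⟨b, hb, hbx⟩ := yy_odd h
  obtain ⟨p, j, hj, hp, hpb⟩ := exists_alt hM hA v k b hb
  have q := hp.ext (a := x) (by rw [hpb]; exact hbx)
    (by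
      have : s(p (2*j), x) ∉ M := fun hm => hx ⟨_, hm, by simp⟩
      simp [this])
    (by
      intro i hi hpi
      have s1 := hA _ _ hbx
      have s3 := hp.side hA (2*j) le_rfl
      have ev : Even (2*j) := by simp
      rw [hpb] at s3
      have s4 := hp.side hA i hi
      rw [hpi] at s4
      have hne : ¬ Even i := by tauto
      have hlt : i < 2*j := lt_of_le_of_ne hi (by rintro rfl; exact hne ev)
      have hm := (hp.2.2.2 i hlt).2 (Nat.not_even_iff_odd.1 hne)
      exact hx ⟨_, hm, by simp [hpi]⟩)
  refine ⟨_, 2*j+1, by omega, by simp, q.2.1, q.2.2.1, ?_, ?_, q.2.2.2⟩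
  · simpa [hp.1] using hv
  · simpa using hx

/-- In a finite 2-regular bipartite graph with matching `M` having no augmenting
paths of length ≤ 2K+1 (K ≥ 2 even), if `v ≠ v'` are both uncovered, then `X_l(v)` and
`X_l(v')` are disjoint for every `l ≤ K`. -/
theorem stmt6 {V : Type*} [Fintype V] (G : SimpleGraph V) (M : Set (Sym2 V))
    (K : ℕ) (hK2 : 2 ≤ K) (hKeven : Even K)
    (hbip : isBipartite G)
    (hdeg : ∀ v : V, (G.neighborSet v).ncard = 2)
    (hM : isMatching G M)
    (hnoaug : ∀ (p : ℕ → V) (l : ℕ), l ≤ 2 * K + 1 → ¬ isAugPath G M p l)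
    (v v' : V) (hvv' : v ≠ v')
    (hv : ¬ coveredBy M v) (hv' : ¬ coveredBy M v') :
    ∀ l : ℕ, l ≤ K → Disjoint (Yseq G M {v} l) (Yseq G M {v'} l) := by
  intro l hl
  rw [Set.disjoint_left]
  intro x hx hx'
  have key := even_disj hdeg hM hvv' hv hv'
  rcases Nat.even_or_odd' l with ⟨k, rfl | rfl⟩
  · exact key _ k k rfl x hx hx'
  · obtain ⟨b, hb, hbx⟩ := yy_odd hx
    obtain ⟨b', hb', hbx'⟩ := yy_odd hx'
    by_cases hc : coveredBy M x
    · obtain ⟨e, he, hxe⟩ := hc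
      obtain ⟨y, rfl⟩ := hxe
      have hxy : G.Adj x y := hM.1 he
      rcases nbr3 hdeg hxy hbx.symm hbx'.symm with h | h | h
      · subst h
        exact key _ k k rfl b hb hb'
      · subst h
        exact key _ k (k+1) rfl b hb (yy_even_mk hb' hbx' he)
      · subst h
        exact key _ (k+1) k rfl b' (yy_even_mk hb hbx he) hb'
    · obtain ⟨p, m, hm, hp⟩ := exists_aug hM hbip hv hc hx
      exact hnoaug p m (by omega) hp
end
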